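/- Fix an integer m ≥ 2, a real α with 1/(n−Δ) < α < 1/(n−1), ε > 0, γ ∈ (0,1/2), and φ as described. Then there is a constant C > 0 such that for every irrational t ∈ ℬ_{m,α} and every real x, the limit defining U(t,x) exists and |U(t,x) − U*(t,x)| ≤ C·t^{αΔ/2^{n−1} − ε}. -/

import Mathlib

open Filter Finset MeasureTheory

/-- An approximant to a real number `t`: a reduced fraction `u/q` with `q ≥ 1`
and `|t - u/q| < 1/q²`. -/
def IsApproximant (t : ℝ) (u q : ℤ) : Prop :=
  1 ≤ q ∧ Int.gcd u q = 1 ∧ |t - (u : ℝ) / (q : ℝ)| < 1 / (q : ℝ) ^ 2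

/-- The set `𝒜_m`: `t ∈ [0,1]` such that for every real `M ≥ m` there is an
approximant `u/q` to `t` with `M^Δ < q ≤ M^(n-Δ)`. -/
def Aset (n : ℕ) (Δ : ℝ) (m : ℤ) : Set ℝ :=
  {t | t ∈ Set.Icc (0 : ℝ) 1 ∧ ∀ M : ℝ, (m : ℝ) ≤ M →
    ∃ u q : ℤ, IsApproximant t u q ∧ M ^ Δ < (q : ℝ) ∧ (q : ℝ) ≤ M ^ ((n : ℝ) - Δ)}

/-- The set `𝒜`: `t ∈ [0,1]` such that for all sufficiently large `M` there is an
approximant `u/q` to `t` with `M^Δ < q ≤ M^(n-Δ)`. -/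
def Aall (n : ℕ) (Δ : ℝ) : Set ℝ :=
  {t | t ∈ Set.Icc (0 : ℝ) 1 ∧ ∃ M₀ : ℝ, ∀ M : ℝ, M₀ ≤ M →
    ∃ u q : ℤ, IsApproximant t u q ∧ M ^ Δ < (q : ℝ) ∧ (q : ℝ) ≤ M ^ ((n : ℝ) - Δ)}

/-- The set `ℬ_{m,α}`: `t ∈ (0,1]` such that for every real `M ≥ m·t^(-α)` there is an
approximant `u/q` to `t` with `M^Δ < q ≤ M^(n-Δ)`. -/
def Bset (n : ℕ) (Δ : ℝ) (m : ℤ) (α : ℝ) : Set ℝ :=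
  {t | t ∈ Set.Ioc (0 : ℝ) 1 ∧ ∀ M : ℝ, (m : ℝ) * t ^ (-α) ≤ M →
    ∃ u q : ℤ, IsApproximant t u q ∧ M ^ Δ < (q : ℝ) ∧ (q : ℝ) ≤ M ^ ((n : ℝ) - Δ)}

/-- `e(ξ) = exp(2πiξ)`. -/
noncomputable def ee (ξ : ℝ) : ℂ := Complex.exp (2 * Real.pi * Complex.I * ξ)

/-- The partial sum defining `U(t,x)`:
`2γ + Σ_{0<|k|≤K} (sin(2πγk)/(πk))·e(t·k^n + x·k)`. -/
noncomputable def Upartial (n : ℕ) (γ t x : ℝ) (K : ℕ) : ℂ :=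
  Complex.ofReal (2 * γ) +
    ∑ k ∈ (Finset.Icc (-(K : ℤ)) (K : ℤ)).filter (· ≠ 0),
      Complex.ofReal (Real.sin (2 * Real.pi * γ * (k : ℝ)) / (Real.pi * (k : ℝ))) *
        ee (t * (k : ℝ) ^ n + x * (k : ℝ))

/-- The smooth cutoff `φ`: `C^∞`, `φ(x) = 1` for `|x| ≤ 1/2`, `φ(x) = 0` for `|x| ≥ 2`,
and `φ(x) + φ(1/x) = 1` for all `x ≠ 0`. -/
def GoodPhi (φ : ℝ → ℝ) : Prop :=
  ContDiff ℝ (⊤ : ℕ∞) φ ∧ (∀ x : ℝ, |x| ≤ 1 / 2 → φ x = 1) ∧ (∀ x : ℝ, 2 ≤ |x| → φ x = 0) ∧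
    (∀ x : ℝ, x ≠ 0 → φ x + φ x⁻¹ = 1)

/-- `U*(t,x) = 2γ + (1/π)·Σ_{k≠0} φ(k·t^α)·(sin(2πγk)/k)·e(t·k^n + x·k)`
(the `k = 0` term vanishes since `sin(0)/0 = 0`). -/
noncomputable def Ustar (n : ℕ) (γ : ℝ) (φ : ℝ → ℝ) (α t x : ℝ) : ℂ :=
  Complex.ofReal (2 * γ) + Complex.ofReal (1 / Real.pi) *
    ∑' k : ℤ,
      Complex.ofReal (φ ((k : ℝ) * t ^ α) * (Real.sin (2 * Real.pi * γ * (k : ℝ)) / (k : ℝ))) *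
        ee (t * (k : ℝ) ^ n + x * (k : ℝ))

/-!
The tail of the series of `U(t,x)` is a pair of one-sided series `∑ sin(2πγk) e(±t k^n + y k) / k`,
cut off below `k ≈ t^{-α}`. Writing the sine as a difference of two exponentials turns their partial
sums into Weyl sums with leading coefficient `±t`. For `t ∈ ℬ_{m,α}` and every `N ≥ t^{-α} / 2`
there is an approximant of `t` with denominator between `N^Δ` and a constant times `N^{n-Δ}`, so
Weyl's inequality bounds the Weyl sum of length `N` by `N^{1 - Δ/2^{n-1} + η}`, uniformly in the
linear coefficient. Abel summation against `1/k` then yields both the convergence and a tail of size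
`(t^α)^{Δ/2^{n-1} - 2η}`.

Weyl's inequality comes from squaring the sum `n - 1` times, each squaring replacing the phase by
its finite differences until it is linear. The linear sums are at most `min(N, 1/‖jt‖)`, where the
frequency `j` is a product of `n - 1` differences and `n!`; the divisor bound shows that each `j`
arises `O(N^η)` times, and the sum over `j` is controlled by the spacing of the multiples of `u/q`.
-/

/-! ### The divisor bound -/

section Divisors

theorem natCast_add_one_le_mul_pow_rpow {ε : ℝ} (hε : 0 < ε) {x : ℝ} (hx : 2 ≤ x) (a : ℕ) :
    (a : ℝ) + 1 ≤ max 1 (1 / (ε * Real.log 2)) * (x ^ a) ^ ε := by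
  have hlog : 0 < Real.log 2 := Real.log_pos one_lt_two
  set A := max 1 (1 / (ε * Real.log 2))
  have hA : 1 ≤ A := le_max_left _ _
  have hA' : 1 ≤ A * (ε * Real.log 2) :=
    (div_le_iff₀ (by positivity)).1 (le_max_right 1 (1 / (ε * Real.log 2)))
  have hexp : 1 + Real.log 2 * (a * ε) ≤ (2 ^ a : ℝ) ^ ε := by
    rw [← Real.rpow_natCast, ← Real.rpow_mul zero_le_two, Real.rpow_def_of_pos two_pos, add_comm]
    exact Real.add_one_le_exp _
  calc (a : ℝ) + 1 ≤ a * (A * (ε * Real.log 2)) + A :=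
        add_le_add (le_mul_of_one_le_right a.cast_nonneg hA') hA
    _ = A * (1 + Real.log 2 * (a * ε)) := by ring
    _ ≤ A * (x ^ a) ^ ε := by gcongr; exact hexp.trans (by gcongr)

theorem natCast_add_one_le_pow_rpow {ε : ℝ} (hε : 0 < ε) {x : ℝ} (hx : 2 ^ (1 / ε) ≤ x) (a : ℕ) :
    (a : ℝ) + 1 ≤ (x ^ a) ^ ε := by
  have hx0 : 0 ≤ x := le_trans (by positivity) hx
  have hx2 : 2 ≤ x ^ ε := by
    simpa [← Real.rpow_mul, hε.ne'] using Real.rpow_le_rpow (by positivity) hx hε.le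
  calc (a : ℝ) + 1 ≤ 2 ^ a := mod_cast Nat.lt_two_pow_self
    _ ≤ (x ^ ε) ^ a := by gcongr
    _ = (x ^ a) ^ ε := by
      rw [← Real.rpow_mul_natCast hx0, mul_comm, Real.rpow_natCast_mul hx0]

theorem exists_card_divisors_le_mul_rpow {ε : ℝ} (hε : 0 < ε) :
    ∃ C : ℝ, 0 ≤ C ∧ ∀ n : ℕ, n ≠ 0 → (#n.divisors : ℝ) ≤ C * (n : ℝ) ^ ε := by
  set A := max 1 (1 / (ε * Real.log 2))
  set P := ⌈(2 : ℝ) ^ (1 / ε)⌉₊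
  have hA : 1 ≤ A := le_max_left _ _
  refine ⟨A ^ P, by positivity, fun n hn => ?_⟩
  have hfactor : ∀ p ∈ n.primeFactors, (n.factorization p : ℝ) + 1 ≤
      (if p < P then A else 1) * ((p : ℝ) ^ n.factorization p) ^ ε := fun p hp => by
    split_ifs with h
    · exact natCast_add_one_le_mul_pow_rpow hε
        (mod_cast (Nat.prime_of_mem_primeFactors hp).two_le) _
    · rw [one_mul]
      exact natCast_add_one_le_pow_rpow hε (Nat.ceil_le.1 (not_lt.1 h)) _
  have hsmall : ∏ p ∈ n.primeFactors, (if p < P then A else 1) ≤ A ^ P := by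
    rw [prod_ite, prod_const, prod_const_one, mul_one]
    refine pow_le_pow_right₀ hA ((card_le_card fun p hp => ?_).trans_eq (card_range P))
    exact mem_range.2 (mem_filter.1 hp).2
  have hprod : ∏ p ∈ n.primeFactors, ((p : ℝ) ^ n.factorization p) ^ ε = (n : ℝ) ^ ε := by
    rw [Real.finsetProd_rpow _ _ fun _ _ => by positivity]
    exact_mod_cast congrArg (fun k : ℕ => (k : ℝ) ^ ε) (Nat.prod_factorization_pow_eq_self hn)
  calc (#n.divisors : ℝ) = ∏ p ∈ n.primeFactors, ((n.factorization p : ℝ) + 1) := by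
        rw [Nat.card_divisors hn]; push_cast; rfl
    _ ≤ ∏ p ∈ n.primeFactors, (if p < P then A else 1) * ((p : ℝ) ^ n.factorization p) ^ ε :=
        prod_le_prod (fun _ _ => by positivity) hfactor
    _ ≤ A ^ P * (n : ℝ) ^ ε := by rw [prod_mul_distrib, hprod]; gcongr

theorem sum_sum_mul_le_sum_card_divisors_mul {g : ℕ → ℝ} (hg : ∀ k, 0 ≤ g k) (A B : ℕ) :
    ∑ a ∈ Icc 1 A, ∑ b ∈ Icc 1 B, g (a * b) ≤ ∑ k ∈ Icc 1 (A * B), #k.divisors * g k := by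
  have hmaps : ∀ x ∈ Icc 1 A ×ˢ Icc 1 B, x.1 * x.2 ∈ Icc 1 (A * B) := fun x hx => by
    obtain ⟨⟨ha, ha'⟩, hb, hb'⟩ := by simpa only [mem_product, mem_Icc] using hx
    exact mem_Icc.2 ⟨Nat.mul_pos ha hb, Nat.mul_le_mul ha' hb'⟩
  rw [← sum_product', ← sum_fiberwise_of_maps_to hmaps]
  refine sum_le_sum fun k hk => ?_
  set fiber := {x ∈ Icc 1 A ×ˢ Icc 1 B | x.1 * x.2 = k}
  have hcard : #fiber ≤ #k.divisors := by
    refine card_le_card_of_injOn Prod.fst (fun x hx => ?_) fun x hx y hy hxy => ?_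
    · exact Nat.mem_divisors.2
        ⟨⟨x.2, (mem_filter.1 hx).2.symm⟩, Nat.one_le_iff_ne_zero.1 (mem_Icc.1 hk).1⟩
    · obtain ⟨hxA, hxk⟩ := mem_filter.1 hx
      refine Prod.ext hxy (Nat.eq_of_mul_eq_mul_left (mem_Icc.1 (mem_product.1 hxA).1).1 ?_)
      rw [hxk, hxy, (mem_filter.1 hy).2]
  calc ∑ x ∈ fiber, g (x.1 * x.2) = #fiber * g k := by
        rw [sum_congr rfl fun x hx => congrArg g (mem_filter.1 hx).2, sum_const, nsmul_eq_mul]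
    _ ≤ #k.divisors * g k := mul_le_mul_of_nonneg_right (mod_cast hcard) (hg k)

theorem exists_sum_sum_mul_le {ε : ℝ} (hε : 0 < ε) :
    ∃ C : ℝ, 0 ≤ C ∧ ∀ g : ℕ → ℝ, (∀ k, 0 ≤ g k) → ∀ A B : ℕ,
      ∑ a ∈ Icc 1 A, ∑ b ∈ Icc 1 B, g (a * b) ≤
        C * ((A * B : ℕ) : ℝ) ^ ε * ∑ k ∈ Icc 1 (A * B), g k := by
  obtain ⟨C, hC, hdiv⟩ := exists_card_divisors_le_mul_rpow hε
  refine ⟨C, hC, fun g hg A B => (sum_sum_mul_le_sum_card_divisors_mul hg A B).trans ?_⟩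
  rw [mul_sum]
  refine sum_le_sum fun k hk => mul_le_mul_of_nonneg_right ?_ (hg k)
  obtain ⟨hk1, hkAB⟩ := mem_Icc.1 hk
  exact (hdiv k (Nat.one_le_iff_ne_zero.1 hk1)).trans (by gcongr)

theorem sum_mul_left_le_sum {g : ℕ → ℝ} (hg : ∀ k, 0 ≤ g k) {e : ℕ} (he : 0 < e) (A : ℕ) :
    ∑ k ∈ Icc 1 A, g (e * k) ≤ ∑ k ∈ Icc 1 (e * A), g k := by
  rw [← sum_image (f := g) (g := (e * ·)) fun _ _ _ _ h => Nat.eq_of_mul_eq_mul_left he h]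
  refine sum_le_sum_of_subset_of_nonneg (image_subset_iff.2 fun k hk => ?_) fun _ _ _ => hg _
  obtain ⟨hk1, hkA⟩ := mem_Icc.1 hk
  exact mem_Icc.2 ⟨Nat.mul_pos he hk1, Nat.mul_le_mul_left e hkA⟩

end Divisors

/-! ### Linear exponential sums -/

section LinearSums

theorem ee_add (x y : ℝ) : ee (x + y) = ee x * ee y := by
  rw [ee, ee, ee, ← Complex.exp_add, Complex.ofReal_add, mul_add]

theorem ee_eq_exp_mul_I (x : ℝ) : ee x = Complex.exp (Complex.I * (2 * Real.pi * x : ℝ)) := by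
  rw [ee]; push_cast; ring_nf

theorem norm_ee (x : ℝ) : ‖ee x‖ = 1 := by
  rw [ee_eq_exp_mul_I, mul_comm, Complex.norm_exp_ofReal_mul_I]

theorem ee_intCast (n : ℤ) : ee n = 1 := by
  rw [ee, Complex.ofReal_intCast, mul_comm, Complex.exp_int_mul_two_pi_mul_I]

theorem star_ee (x : ℝ) : star (ee x) = ee (-x) := by
  rw [← starRingEnd_apply, ee, ee, ← Complex.exp_conj]
  simp [map_ofNat (starRingEnd ℂ) 2]

theorem four_mul_norm_le_norm_ee_sub_one (x : ℝ) :
    4 * ‖(x : UnitAddCircle)‖ ≤ ‖ee x - 1‖ := by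
  set r := x - round x with hr
  have hround : |r| ≤ 1 / 2 := abs_sub_round x
  have hee : ee x = ee r := by
    rw [← sub_add_cancel x (round x : ℝ), ee_add, ee_intCast, mul_one]
  have hjordan := Real.mul_abs_le_abs_sin (x := Real.pi * r) (by
    rw [abs_mul, abs_of_pos Real.pi_pos]; nlinarith [Real.pi_pos])
  rw [UnitAddCircle.norm_eq, ← hr, hee, ee_eq_exp_mul_I, Complex.norm_exp_I_mul_ofReal_sub_one,
    norm_mul, Real.norm_ofNat, Real.norm_eq_abs, show 2 * Real.pi * r / 2 = Real.pi * r by ring]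
  rw [abs_mul, abs_of_pos Real.pi_pos, ← mul_assoc, div_mul_cancel₀ _ Real.pi_ne_zero] at hjordan
  linarith

theorem norm_sum_ee_le (f : ℕ → ℝ) {M N : ℕ} (hMN : M ≤ N) :
    ‖∑ k ∈ range M, ee (f k)‖ ≤ N :=
  calc ‖∑ k ∈ range M, ee (f k)‖ ≤ ∑ k ∈ range M, ‖ee (f k)‖ := norm_sum_le _ _
    _ = M := by simp [norm_ee]
    _ ≤ N := mod_cast hMN

theorem norm_sum_ee_linear_mul_norm_le_one (c θ : ℝ) (N : ℕ) :
    ‖∑ k ∈ range N, ee (c + θ * k)‖ * ‖(θ : UnitAddCircle)‖ ≤ 1 := by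
  have htelescope : (∑ k ∈ range N, ee (c + θ * k)) * (ee θ - 1) = ee (c + θ * N) - ee c := by
    have hstep : ∀ k : ℕ, ee (c + θ * k) * (ee θ - 1) =
        ee (c + θ * (k + 1 : ℕ)) - ee (c + θ * k) := fun k => by
      rw [mul_sub_one, ← ee_add]; push_cast; ring_nf
    rw [sum_mul, sum_congr rfl fun k _ => hstep k, sum_range_sub fun k : ℕ => ee (c + θ * k)]
    simp only [Nat.cast_zero, mul_zero, add_zero]
  have hle : ‖∑ k ∈ range N, ee (c + θ * k)‖ * ‖ee θ - 1‖ ≤ 1 + 1 := by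
    rw [← norm_mul, htelescope]
    exact (norm_sub_le _ _).trans_eq (by rw [norm_ee, norm_ee])
  nlinarith [mul_le_mul_of_nonneg_left (four_mul_norm_le_norm_ee_sub_one θ)
    (norm_nonneg (∑ k ∈ range N, ee (c + θ * k)))]

/-- The truncated inverse distance `min N ‖z‖⁻¹` to `0` on the circle, the standard majorant of
the linear exponential sums of length at most `N`. Written as a quotient so that its value at
`z = 0` is `N`. -/
noncomputable def truncInv (N : ℝ) (z : UnitAddCircle) : ℝ := N / max 1 (N * ‖z‖)

variable {N : ℝ} {z : UnitAddCircle}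

theorem truncInv_nonneg (hN : 0 ≤ N) (z : UnitAddCircle) : 0 ≤ truncInv N z := by
  unfold truncInv; positivity

theorem truncInv_le (hN : 0 ≤ N) (z : UnitAddCircle) : truncInv N z ≤ N :=
  div_le_self hN (le_max_left _ _)

theorem truncInv_le_inv {c : ℝ} (hN : 0 ≤ N) (hc : 0 < c) (h : c ≤ ‖z‖) : truncInv N z ≤ c⁻¹ := by
  rw [truncInv, div_le_iff₀ (by positivity), inv_mul_eq_div, le_div_iff₀ hc]
  exact (mul_le_mul_of_nonneg_left h hN).trans (le_max_right _ _)

theorem le_truncInv {S : ℝ} (hSN : S ≤ N) (hS : S * ‖z‖ ≤ 1) (hN : 0 ≤ N) : S ≤ truncInv N z := by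
  rw [truncInv, le_div_iff₀ (by positivity)]
  rcases max_cases 1 (N * ‖z‖) with ⟨h, -⟩ | ⟨h, -⟩ <;> rw [h]
  · rwa [mul_one]
  · nlinarith

theorem norm_sum_ee_linear_le_truncInv (c θ : ℝ) {M N : ℕ} (hMN : M ≤ N) :
    ‖∑ k ∈ range M, ee (c + θ * k)‖ ≤ truncInv N θ :=
  le_truncInv (norm_sum_ee_le _ hMN) (norm_sum_ee_linear_mul_norm_le_one c θ M) N.cast_nonneg

end LinearSums

/-! ### Sums of truncated inverse distances along an arithmetic progression -/

section BlockSums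

/-- Majorant of `truncInv N z` when `z` is within `2 / q` of a point at distance `s / q` from `0`.
At `s = 0` the second summand has the junk value `0`. -/
noncomputable def blockMajorant (N : ℝ) (q s : ℕ) : ℝ := (if s < 3 then N else 0) + 3 * q / s

variable {N : ℝ} {q : ℕ}

theorem blockMajorant_nonneg (hN : 0 ≤ N) (q s : ℕ) : 0 ≤ blockMajorant N q s := by
  unfold blockMajorant; split_ifs <;> positivity

theorem truncInv_le_blockMajorant (hN : 0 ≤ N) (hq : 0 < q) {z : UnitAddCircle} {s : ℕ}
    (hs : (s : ℝ) / q ≤ ‖z‖ + 2 / q) : truncInv N z ≤ blockMajorant N q s := by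
  unfold blockMajorant
  split_ifs with h3
  · exact (truncInv_le hN z).trans (le_add_of_nonneg_right (by positivity))
  · have hs3 : (3 : ℝ) ≤ s := mod_cast not_lt.1 h3
    have hq0 : (0 : ℝ) < q := mod_cast hq
    have hdist : (s : ℝ) / (3 * q) ≤ ‖z‖ := by
      refine le_trans ?_ (sub_le_iff_le_add.2 hs)
      rw [← sub_div, div_le_div_iff₀ (by positivity) hq0]
      nlinarith
    simpa using truncInv_le_inv hN (by positivity) hdist

theorem sum_blockMajorant_le (hN : 0 ≤ N) (q : ℕ) :
    ∑ s ∈ range (q + 1), blockMajorant N q s ≤ 3 * N + 3 * q * (1 + Real.log q) := by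
  simp only [blockMajorant, sum_add_distrib]
  gcongr
  · calc ∑ s ∈ range (q + 1), (if s < 3 then N else 0) = #{s ∈ range (q + 1) | s < 3} * N := by
          rw [← sum_filter, sum_const, nsmul_eq_mul]
      _ ≤ 3 * N := by
          gcongr
          exact_mod_cast (card_le_card fun s hs => mem_range.2 (mem_filter.1 hs).2).trans_eq
            (card_range 3)
  · calc ∑ s ∈ range (q + 1), 3 * (q : ℝ) / s = 3 * q * harmonic q := by
          rw [sum_range_succ', harmonic]
          push_cast
          simp [mul_sum, div_eq_mul_inv]
      _ ≤ 3 * q * (1 + Real.log q) := by gcongr; exact harmonic_le_one_add_log q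

theorem sum_zmod_val [NeZero q] (F : ℕ → ℝ) : ∑ a : ZMod q, F a.val = ∑ s ∈ range q, F s :=
  sum_nbij' ZMod.val (fun s => (s : ZMod q)) (fun a _ => mem_range.2 a.val_lt)
    (fun _ _ => mem_univ _) (fun a _ => ZMod.natCast_zmod_val a)
    (fun _ hs => ZMod.val_cast_of_lt (mem_range.1 hs)) fun _ _ => rfl

theorem sum_range_val_add_mul [NeZero q] (F : ℕ → ℝ) (c : ZMod q) {u : ZMod q} (hu : IsUnit u) :
    ∑ j ∈ range q, F (c + j * u).val = ∑ s ∈ range q, F s := by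
  obtain ⟨u, rfl⟩ := hu
  calc ∑ j ∈ range q, F (c + j * u).val = ∑ a : ZMod q, F (c + a * u).val := by
        rw [← sum_zmod_val fun j => F (c + (j : ZMod q) * u).val]
        simp only [ZMod.natCast_zmod_val]
    _ = ∑ a : ZMod q, F a.val :=
        ((Units.mulRight u).trans (Equiv.addLeft c)).sum_comp fun a => F a.val
    _ = ∑ s ∈ range q, F s := sum_zmod_val F

variable {θ : ℝ} {u : ℤ}

theorem abs_add_mul_sub_intCast_div_le (hθ : IsApproximant θ u q) (y : ℝ) {j : ℕ} (hj : j < q) :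
    |y + j * θ - ((⌊q * y⌋ + j * u : ℤ) : ℝ) / q| ≤ 2 / q := by
  obtain ⟨hq, -, hθu⟩ := hθ
  rw [Int.cast_natCast] at hθu
  have hq0 : (0 : ℝ) < q := by exact_mod_cast hq
  have hfloor : |y - ⌊q * y⌋ / q| ≤ 1 / q := by
    rw [show y - ⌊q * y⌋ / q = Int.fract (q * y) / q by
      rw [Int.fract, sub_div, mul_div_cancel_left₀ y hq0.ne'],
      abs_of_nonneg (div_nonneg (Int.fract_nonneg _) hq0.le)]
    gcongr
    exact (Int.fract_lt_one _).le
  have hslope : |j * (θ - u / q)| ≤ 1 / q := by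
    rw [abs_mul, Nat.abs_cast]
    calc (j : ℝ) * |θ - u / q| ≤ q * (1 / (q : ℝ) ^ 2) := by gcongr
      _ = 1 / q := by field_simp
  calc |y + j * θ - ((⌊q * y⌋ + j * u : ℤ) : ℝ) / q|
        = |(y - ⌊q * y⌋ / q) + j * (θ - u / q)| := by push_cast; ring_nf
    _ ≤ 1 / q + 1 / q := (abs_add_le _ _).trans (add_le_add hfloor hslope)
    _ = 2 / q := by ring

theorem norm_intCast_div (a : ℤ) [NeZero q] :
    ‖((a / q : ℝ) : UnitAddCircle)‖ =
      (min (a : ZMod q).val (q - (a : ZMod q).val) : ℕ) / (q : ℝ) := by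
  have h := AddCircle.norm_div_natCast (p := (1 : ℝ)) (m := (a : ZMod q).val) (n := q)
  rw [Nat.mod_eq_of_lt (ZMod.val_lt _)] at h
  rw [← ZMod.toAddCircle_intCast, ZMod.toAddCircle_apply]
  simpa using h

theorem truncInv_add_mul_le (hN : 0 ≤ N) [NeZero q] (hθ : IsApproximant θ u q) (y : ℝ) {j : ℕ}
    (hj : j < q) :
    truncInv N (y + j * θ : ℝ) ≤ blockMajorant N q ((⌊q * y⌋ : ZMod q) + j * u).val +
      blockMajorant N q (q - ((⌊q * y⌋ : ZMod q) + j * u).val) := by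
  set a := ⌊q * y⌋ + j * u with ha
  have hcast : (⌊q * y⌋ : ZMod q) + j * u = (a : ZMod q) := by rw [ha]; push_cast; rfl
  rw [hcast]
  have hdist : ((min (a : ZMod q).val (q - (a : ZMod q).val) : ℕ) : ℝ) / q ≤
      ‖((y + j * θ : ℝ) : UnitAddCircle)‖ + 2 / q := by
    rw [← norm_intCast_div]
    have h := norm_sub_norm_le ((a / q : ℝ) : UnitAddCircle) (y + j * θ : ℝ)
    rw [norm_sub_rev, ← AddCircle.coe_sub] at h
    linarith [h.trans (QuotientAddGroup.norm_mk_le_norm.trans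
      (abs_add_mul_sub_intCast_div_le hθ y hj))]
  refine (truncInv_le_blockMajorant hN (NeZero.pos q) hdist).trans ?_
  rcases min_choice (a : ZMod q).val (q - (a : ZMod q).val) with h | h <;> rw [h]
  · exact le_add_of_nonneg_right (blockMajorant_nonneg hN _ _)
  · exact le_add_of_nonneg_left (blockMajorant_nonneg hN _ _)

theorem sum_range_truncInv_add_mul_le (hN : 0 ≤ N) (hθ : IsApproximant θ u q) (y : ℝ) :
    ∑ j ∈ range q, truncInv N (y + j * θ : ℝ) ≤ 6 * N + 6 * q * (1 + Real.log q) := by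
  have : NeZero q := ⟨by have := hθ.1; omega⟩
  have hu : IsUnit (u : ZMod q) :=
    (ZMod.coe_int_isUnit_iff_isCoprime u q).2 (Int.isCoprime_iff_gcd_eq_one.2 hθ.2.1).symm
  set G := blockMajorant N q
  have hG : ∀ s, 0 ≤ G s := blockMajorant_nonneg hN q
  calc ∑ j ∈ range q, truncInv N (y + j * θ : ℝ)
      ≤ ∑ j ∈ range q, (G ((⌊q * y⌋ : ZMod q) + j * u).val +
          G (q - ((⌊q * y⌋ : ZMod q) + j * u).val)) :=
        sum_le_sum fun j hj => truncInv_add_mul_le hN hθ y (mem_range.1 hj)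
    _ = ∑ s ∈ range q, G s + ∑ s ∈ range q, G (q - s) := by
        rw [sum_add_distrib, sum_range_val_add_mul G _ hu,
          sum_range_val_add_mul (fun s => G (q - s)) _ hu]
    _ ≤ ∑ s ∈ range (q + 1), G s + ∑ s ∈ range (q + 1), G s := by
        refine add_le_add ?_ ?_
        · exact sum_le_sum_of_subset_of_nonneg (range_mono q.le_succ) fun s _ _ => hG s
        · rw [← sum_range_reflect G]
          exact sum_le_sum_of_subset_of_nonneg (range_mono q.le_succ) fun s _ _ => hG _
    _ ≤ 6 * N + 6 * q * (1 + Real.log q) := by linarith [sum_blockMajorant_le hN q]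

theorem sum_range_mul_truncInv_le (hN : 0 ≤ N) (hθ : IsApproximant θ u q) (K : ℕ) :
    ∑ j ∈ range (K * q), truncInv N (j * θ : ℝ) ≤ K * (6 * N + 6 * q * (1 + Real.log q)) := by
  induction K with
  | zero => simp
  | succ K ih =>
    have hshift : ∀ j : ℕ, ((K * q + j : ℕ) : ℝ) * θ = (K * q : ℕ) * θ + j * θ := fun j => by
      rw [Nat.cast_add, add_mul]
    rw [Nat.succ_mul, sum_range_add, Nat.cast_succ, add_one_mul]
    simp only [hshift]
    exact add_le_add ih (sum_range_truncInv_add_mul_le hN hθ _)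

theorem sum_Icc_truncInv_mul_le (hN : 0 ≤ N) (hθ : IsApproximant θ u q) (X : ℕ) :
    ∑ j ∈ Icc 1 X, truncInv N (j * θ : ℝ) ≤
      ((X : ℝ) / q + 1) * (6 * N + 6 * q * (1 + Real.log q)) := by
  have hX : X < (X / q + 1) * q :=
    Nat.lt_mul_of_div_lt (Nat.lt_succ_self _) (by have := hθ.1; omega)
  calc ∑ j ∈ Icc 1 X, truncInv N (j * θ : ℝ)
      ≤ ∑ j ∈ range ((X / q + 1) * q), truncInv N (j * θ : ℝ) :=
        sum_le_sum_of_subset_of_nonneg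
          (fun j hj => mem_range.2 ((mem_Icc.1 hj).2.trans_lt hX)) fun _ _ _ => truncInv_nonneg hN _
    _ ≤ (X / q + 1 : ℕ) * (6 * N + 6 * q * (1 + Real.log q)) :=
        sum_range_mul_truncInv_le hN hθ _
    _ ≤ ((X : ℝ) / q + 1) * (6 * N + 6 * q * (1 + Real.log q)) := by
        have hlog : 0 ≤ Real.log q := Real.log_natCast_nonneg q
        push_cast
        gcongr
        exact Nat.cast_div_le

end BlockSums

/-! ### Weyl differencing -/

section Differencing

theorem norm_sq_sum_range_le {𝕜 E : Type*} [RCLike 𝕜] [SeminormedAddCommGroup E]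
    [InnerProductSpace 𝕜 E] (z : ℕ → E) (N : ℕ) :
    ‖∑ k ∈ range N, z k‖ ^ 2 ≤
      2 * ∑ m ∈ range N, RCLike.re (inner 𝕜 (∑ k ∈ range (m + 1), z k) (z m)) := by
  induction N with
  | zero => simp
  | succ N ih =>
    rw [sum_range_succ (fun m => RCLike.re (inner 𝕜 (∑ k ∈ range (m + 1), z k) (z m))), mul_add,
      sum_range_succ z N, norm_add_sq (𝕜 := 𝕜), inner_add_left, map_add, inner_self_eq_norm_sq]
    nlinarith [sq_nonneg ‖z N‖]

theorem norm_sq_sum_range_le_sum_norm_sum_inner (𝕜 : Type*) {E : Type*} [RCLike 𝕜]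
    [SeminormedAddCommGroup E] [InnerProductSpace 𝕜 E] (z : ℕ → E) (N : ℕ) :
    ‖∑ k ∈ range N, z k‖ ^ 2 ≤
      2 * ∑ h ∈ range N, ‖∑ k ∈ range (N - h), inner 𝕜 (z k) (z (k + h))‖ := by
  have hflip : ∑ m ∈ range N, inner 𝕜 (∑ k ∈ range (m + 1), z k) (z m) =
      ∑ h ∈ range N, ∑ k ∈ range (N - h), inner 𝕜 (z k) (z (k + h)) := by
    rw [← sum_range_diag_flip N fun h k => inner 𝕜 (z k) (z (k + h))]
    refine sum_congr rfl fun m _ => ?_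
    rw [← sum_flip, sum_inner]
    refine sum_congr rfl fun h hh => ?_
    rw [Nat.sub_add_cancel (mem_range_succ_iff.1 hh)]
  calc ‖∑ k ∈ range N, z k‖ ^ 2
      ≤ 2 * RCLike.re (∑ h ∈ range N, ∑ k ∈ range (N - h), inner 𝕜 (z k) (z (k + h))) := by
        rw [← hflip, map_sum]
        exact norm_sq_sum_range_le z N
    _ ≤ 2 * ∑ h ∈ range N, ‖∑ k ∈ range (N - h), inner 𝕜 (z k) (z (k + h))‖ := by
        gcongr
        exact (RCLike.re_le_norm _).trans (norm_sum_le _ _)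

open Polynomial

theorem norm_sq_sum_ee_eval_le (p : ℝ[X]) (N : ℕ) :
    ‖∑ k ∈ range N, ee (p.eval (k : ℝ))‖ ^ 2 ≤
      2 * ∑ h ∈ range N, ‖∑ k ∈ range (N - h), ee ((taylor (h : ℝ) p - p).eval (k : ℝ))‖ := by
  have hinner : ∀ h k : ℕ, ee ((taylor (h : ℝ) p - p).eval (k : ℝ)) =
      inner ℂ (ee (p.eval (k : ℝ))) (ee (p.eval ((k + h : ℕ) : ℝ))) := fun h k => by
    rw [RCLike.inner_apply, starRingEnd_apply, star_ee, ← ee_add, eval_sub, taylor_eval,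
      ← sub_eq_add_neg, Nat.cast_add]
  simp only [hinner]
  exact norm_sq_sum_range_le_sum_norm_sum_inner ℂ (fun k : ℕ => ee (p.eval (k : ℝ))) N

variable {R : Type*} [CommRing R] {d : ℕ} {p : R[X]}

theorem coeff_taylor_sub_self (hp : p.natDegree ≤ d + 1) (r : R) :
    (taylor r p - p).coeff d = (d + 1) * r * p.coeff (d + 1) := by
  have hdeg : (hasseDeriv d p).natDegree < 2 := by
    have := natDegree_hasseDeriv_le p d
    omega
  rw [coeff_sub, taylor_coeff, eval_eq_sum_range' hdeg, sum_range_succ, sum_range_one,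
    hasseDeriv_coeff, hasseDeriv_coeff, zero_add, Nat.choose_self, add_comm 1 d,
    Nat.choose_succ_self_right]
  push_cast
  ring

theorem natDegree_taylor_sub_self_le (hp : p.natDegree ≤ d + 1) (r : R) :
    (taylor r p - p).natDegree ≤ d := by
  refine natDegree_le_iff_coeff_eq_zero.2 fun j hj => ?_
  have hdeg : (hasseDeriv j p).natDegree < 1 := by
    have := natDegree_hasseDeriv_le p j
    omega
  rw [coeff_sub, taylor_coeff, eval_eq_sum_range' hdeg, sum_range_one, hasseDeriv_coeff, zero_add,
    Nat.choose_self, Nat.cast_one, pow_zero, one_mul, mul_one, sub_self]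

end Differencing

section WeylDifferencing

open Polynomial
open scoped Nat

theorem card_mul_pow_sum_le_card_pow_mul_sum_pow {ι : Type*} {s : Finset ι} {f : ι → ℝ}
    (hf : ∀ i ∈ s, 0 ≤ f i) {k : ℕ} (hk : k ≠ 0) :
    #s * (∑ i ∈ s, f i) ^ k ≤ #s ^ k * ∑ i ∈ s, f i ^ k := by
  obtain ⟨k, rfl⟩ := Nat.exists_eq_succ_of_ne_zero hk
  rcases s.eq_empty_or_nonempty with rfl | hs
  · simp
  · have hcard : (0 : ℝ) < #s := mod_cast hs.card_pos
    have h := (div_le_iff₀ (pow_pos hcard k)).1 (pow_sum_div_card_le_sum_pow hf k)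
    calc #s * (∑ i ∈ s, f i) ^ (k + 1) ≤ #s * ((∑ i ∈ s, f i ^ (k + 1)) * #s ^ k) := by gcongr
      _ = #s ^ (k + 1) * ∑ i ∈ s, f i ^ (k + 1) := by ring

theorem mul_norm_sum_ee_eval_pow_le (p : ℝ[X]) {M N : ℕ} (hMN : M ≤ N) {k : ℕ} (hk : k ≠ 0) :
    N * ‖∑ i ∈ range M, ee (p.eval (i : ℝ))‖ ^ (2 * k) ≤ 2 ^ k * N ^ k * (N ^ k +
      ∑ h ∈ Icc 1 N, ‖∑ i ∈ range (M - h), ee ((taylor (h : ℝ) p - p).eval (i : ℝ))‖ ^ k) := by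
  set F : ℕ → ℝ := fun h => ‖∑ i ∈ range (M - h), ee ((taylor (h : ℝ) p - p).eval (i : ℝ))‖
  have hF : ∀ h, 0 ≤ F h := fun h => norm_nonneg _
  have hdiff : ‖∑ i ∈ range M, ee (p.eval (i : ℝ))‖ ^ 2 ≤ 2 * ∑ h ∈ range N, F h := by
    refine (norm_sq_sum_ee_eval_le p M).trans ?_
    gcongr
  have hsplit : ∑ h ∈ range N, F h ^ k ≤ N ^ k + ∑ h ∈ Icc 1 N, F h ^ k := by
    calc ∑ h ∈ range N, F h ^ k ≤ ∑ h ∈ insert 0 (Icc 1 N), F h ^ k := by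
          refine sum_le_sum_of_subset_of_nonneg (fun h hh => ?_) fun h _ _ => pow_nonneg (hF h) k
          simp only [mem_range, mem_insert, mem_Icc] at hh ⊢
          omega
      _ = F 0 ^ k + ∑ h ∈ Icc 1 N, F h ^ k := sum_insert (by simp)
      _ ≤ _ := by gcongr; exact norm_sum_ee_le _ ((Nat.sub_le _ _).trans hMN)
  calc N * ‖∑ i ∈ range M, ee (p.eval (i : ℝ))‖ ^ (2 * k)
      ≤ N * (2 * ∑ h ∈ range N, F h) ^ k := by rw [pow_mul]; gcongr
    _ = 2 ^ k * (N * (∑ h ∈ range N, F h) ^ k) := by ring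
    _ ≤ 2 ^ k * (N ^ k * ∑ h ∈ range N, F h ^ k) := by
        refine mul_le_mul_of_nonneg_left ?_ (by positivity)
        simpa only [card_range] using
          card_mul_pow_sum_le_card_pow_mul_sum_pow (s := range N) (fun h _ => hF h) hk
    _ ≤ 2 ^ k * N ^ k * (N ^ k + ∑ h ∈ Icc 1 N, F h ^ k) := by rw [mul_assoc]; gcongr

theorem exists_sum_sum_truncInv_le (d : ℕ) {ε : ℝ} (hε : 0 < ε) :
    ∃ C : ℝ, 0 ≤ C ∧ ∀ (N : ℕ) (θ : ℝ),
      ∑ h ∈ Icc 1 N, ∑ j ∈ Icc 1 ((d + 1)! * N ^ d), truncInv N (j * ((d + 2) * h * θ) : ℝ) ≤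
        C * (N : ℝ) ^ ε * ∑ j ∈ Icc 1 ((d + 2)! * N ^ (d + 1)), truncInv N (j * θ : ℝ) := by
  obtain ⟨C, hC, hdiv⟩ := exists_sum_sum_mul_le (div_pos hε d.cast_add_one_pos)
  set ε' := ε / (d + 1) with hε'
  refine ⟨C * ((d + 1)! : ℝ) ^ ε', by positivity, fun N θ => ?_⟩
  set g : ℕ → ℝ := fun j => truncInv N (j * θ : ℝ)
  have hg : ∀ j, 0 ≤ g j := fun j => truncInv_nonneg N.cast_nonneg _
  set J := (d + 1)! * N ^ d with hJ
  have hmulJ : (d + 2) * (N * J) = (d + 2)! * N ^ (d + 1) := by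
    rw [hJ, Nat.factorial_succ (d + 1)]
    ring
  have hterm : ∀ h j : ℕ, truncInv N (j * ((d + 2) * h * θ) : ℝ) = g ((d + 2) * (h * j)) :=
    fun h j => by simp only [g]; push_cast; congr 2; ring
  have hrpow : ((N * J : ℕ) : ℝ) ^ ε' = ((d + 1)! : ℝ) ^ ε' * (N : ℝ) ^ ε := by
    rw [hJ, mul_left_comm, ← pow_succ', Nat.cast_mul, Real.mul_rpow (by positivity) (by positivity),
      Nat.cast_pow, ← Real.rpow_natCast_mul N.cast_nonneg, Nat.cast_succ, hε',
      mul_div_cancel₀ ε d.cast_add_one_ne_zero]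
  calc ∑ h ∈ Icc 1 N, ∑ j ∈ Icc 1 J, truncInv N (j * ((d + 2) * h * θ) : ℝ)
      = ∑ h ∈ Icc 1 N, ∑ j ∈ Icc 1 J, g ((d + 2) * (h * j)) := by simp only [hterm]
    _ ≤ C * ((N * J : ℕ) : ℝ) ^ ε' * ∑ k ∈ Icc 1 (N * J), g ((d + 2) * k) :=
        hdiv (fun k => g ((d + 2) * k)) (fun k => hg _) N J
    _ ≤ C * ((N * J : ℕ) : ℝ) ^ ε' * ∑ k ∈ Icc 1 ((d + 2) * (N * J)), g k := by
        gcongr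
        exact sum_mul_left_le_sum hg (Nat.succ_pos _) _
    _ = C * ((d + 1)! : ℝ) ^ ε' * (N : ℝ) ^ ε * ∑ j ∈ Icc 1 ((d + 2)! * N ^ (d + 1)), g j := by
        rw [hrpow, hmulJ, ← mul_assoc C]

/-- The bound that `d` steps of Weyl differencing give for the exponential sums of the polynomials
of degree at most `d + 1`: the surviving linear sums are collected, through the divisor bound, into
a sum of truncated inverse distances. -/
def WeylDifferencingBound (d : ℕ) (C ε : ℝ) : Prop :=
  ∀ p : ℝ[X], p.natDegree ≤ d + 1 → ∀ M N : ℕ, 1 ≤ N → M ≤ N →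
    N ^ (d + 1) * ‖∑ k ∈ range M, ee (p.eval (k : ℝ))‖ ^ 2 ^ d ≤
      C * N ^ 2 ^ d * (N : ℝ) ^ ε *
        (N ^ d + ∑ j ∈ Icc 1 ((d + 1)! * N ^ d), truncInv N (j * p.coeff (d + 1) : ℝ))

theorem weylDifferencingBound_zero {ε : ℝ} (hε : 0 ≤ ε) : WeylDifferencingBound 0 1 ε := by
  intro p hp M N hN hMN
  have hlinear : ‖∑ k ∈ range M, ee (p.eval (k : ℝ))‖ ≤ truncInv N (p.coeff 1 : ℝ) := by
    have heval : ∀ k : ℕ, p.eval (k : ℝ) = p.coeff 0 + p.coeff 1 * k := fun k => by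
      rw [eval_eq_sum_range' (Nat.lt_succ_of_le hp), sum_range_succ, sum_range_one]
      simp
    simp only [heval]
    exact norm_sum_ee_linear_le_truncInv _ _ hMN
  have hNε : 1 ≤ (N : ℝ) ^ ε := Real.one_le_rpow (mod_cast hN) hε
  have hnonneg := truncInv_nonneg N.cast_nonneg (p.coeff 1 : UnitAddCircle)
  simp only [zero_add, pow_one, pow_zero, Nat.factorial_one, mul_one, Icc_self, sum_singleton,
    Nat.cast_one, one_mul]
  rw [mul_assoc]
  gcongr
  nlinarith

theorem WeylDifferencingBound.sum_taylor_sub_self_le {d : ℕ} {C ε : ℝ}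
    (hweyl : WeylDifferencingBound d C ε) {p : ℝ[X]} (hp : p.natDegree ≤ d + 2) {M N : ℕ}
    (hN : 1 ≤ N) (hMN : M ≤ N) :
    ∑ h ∈ Icc 1 N, N ^ (d + 1) *
        ‖∑ i ∈ range (M - h), ee ((taylor (h : ℝ) p - p).eval (i : ℝ))‖ ^ 2 ^ d ≤
      C * N ^ 2 ^ d * N ^ ε * (N ^ (d + 1) + ∑ h ∈ Icc 1 N, ∑ j ∈ Icc 1 ((d + 1)! * N ^ d),
        truncInv N (j * ((d + 2) * h * p.coeff (d + 2)) : ℝ)) := by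
  have hcoeff : ∀ h : ℕ, (taylor (h : ℝ) p - p).coeff (d + 1) = (d + 2) * h * p.coeff (d + 2) :=
    fun h => by rw [coeff_taylor_sub_self hp]; push_cast; ring
  calc _ ≤ ∑ h ∈ Icc 1 N, C * N ^ 2 ^ d * N ^ ε * (N ^ d + ∑ j ∈ Icc 1 ((d + 1)! * N ^ d),
          truncInv N (j * ((d + 2) * h * p.coeff (d + 2)) : ℝ)) :=
        sum_le_sum fun h _ => hcoeff h ▸ hweyl _ (natDegree_taylor_sub_self_le hp h) _ N hN
          ((Nat.sub_le M h).trans hMN)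
    _ = _ := by
        rw [← mul_sum, sum_add_distrib, sum_const, Nat.card_Icc, nsmul_eq_mul, pow_succ']
        rfl

theorem WeylDifferencingBound.exists_succ {d : ℕ} {C ε : ℝ} (hC : 0 ≤ C) (hε : 0 < ε)
    (hweyl : WeylDifferencingBound d C (ε / 2)) :
    ∃ C' : ℝ, 0 ≤ C' ∧ WeylDifferencingBound (d + 1) C' ε := by
  obtain ⟨D, hD, hdiv⟩ := exists_sum_sum_truncInv_le d (half_pos hε)
  refine ⟨2 ^ 2 ^ d * (1 + C * (1 + D)), by positivity, fun p hp M N hN hMN => ?_⟩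
  set K : ℕ := 2 ^ d
  set E := (N : ℝ) ^ (ε / 2)
  set T := ∑ j ∈ Icc 1 ((d + 2)! * N ^ (d + 1)), truncInv N (j * p.coeff (d + 2) : ℝ)
  set F : ℕ → ℝ := fun h => ‖∑ i ∈ range (M - h), ee ((taylor (h : ℝ) p - p).eval (i : ℝ))‖
  set n : ℝ := N ^ (d + 1)
  have hE : 1 ≤ E := Real.one_le_rpow (mod_cast hN) (half_pos hε).le
  have hE2 : (N : ℝ) ^ ε = E ^ 2 := by
    rw [← Real.rpow_mul_natCast N.cast_nonneg, Nat.cast_ofNat, div_mul_cancel₀ ε two_ne_zero]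
  have hT : 0 ≤ T := sum_nonneg fun _ _ => truncInv_nonneg N.cast_nonneg _
  have hn : 0 ≤ n := by positivity
  have hF : ∑ h ∈ Icc 1 N, n * F h ^ K ≤ C * N ^ K * E * (n + D * E * T) :=
    (hweyl.sum_taylor_sub_self_le hp hN hMN).trans (by gcongr; exact hdiv N _)
  calc N ^ (d + 1 + 1) * ‖∑ k ∈ range M, ee (p.eval (k : ℝ))‖ ^ 2 ^ (d + 1)
      = n * (N * ‖∑ k ∈ range M, ee (p.eval (k : ℝ))‖ ^ (2 * K)) := by rw [pow_succ' 2 d]; ring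
    _ ≤ n * (2 ^ K * N ^ K * (N ^ K + ∑ h ∈ Icc 1 N, F h ^ K)) := by
        exact mul_le_mul_of_nonneg_left
          (mul_norm_sum_ee_eval_pow_le p hMN (pow_ne_zero d two_ne_zero)) hn
    _ = 2 ^ K * N ^ K * (n * N ^ K + ∑ h ∈ Icc 1 N, n * F h ^ K) := by rw [← mul_sum]; ring
    _ ≤ 2 ^ K * N ^ K * (n * N ^ K + C * N ^ K * E * (n + D * E * T)) := by gcongr
    _ = 2 ^ K * N ^ (2 * K) * (1 * n + C * E * (n + D * E * T)) := by ring
    _ ≤ 2 ^ K * N ^ (2 * K) * (E ^ 2 * (n + T) + C * E * (E * (n + T) + D * E * (n + T))) := by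
        gcongr
        · exact one_le_pow₀ hE
        · exact le_add_of_nonneg_right hT
        · exact (le_add_of_nonneg_right hT).trans (le_mul_of_one_le_left (by positivity) hE)
        · exact le_add_of_nonneg_left hn
    _ = 2 ^ K * (1 + C * (1 + D)) * N ^ 2 ^ (d + 1) * N ^ ε * (n + T) := by
        rw [hE2, pow_succ' 2 d]; ring

theorem exists_weylDifferencingBound (d : ℕ) :
    ∀ {ε : ℝ}, 0 < ε → ∃ C : ℝ, 0 ≤ C ∧ WeylDifferencingBound d C ε := by
  induction d with
  | zero => exact fun hε => ⟨1, zero_le_one, weylDifferencingBound_zero hε.le⟩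
  | succ d ih =>
    intro ε hε
    obtain ⟨C, hC, hweyl⟩ := ih (half_pos hε)
    exact hweyl.exists_succ hC hε

end WeylDifferencing

/-! ### Weyl's inequality -/

section WeylInequality

open Polynomial
open scoped Nat

theorem one_add_log_le_mul_rpow {ε : ℝ} (hε : 0 < ε) {x y : ℝ} {n : ℕ} (hx : 1 ≤ x) (hy : 0 < y)
    (hyx : y ≤ x ^ n) : 1 + Real.log y ≤ (1 + n / ε) * x ^ ε := by
  have hx0 : 0 < x := one_pos.trans_le hx
  calc 1 + Real.log y ≤ 1 + n * Real.log x := by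
        rw [← Real.log_pow]; gcongr
    _ ≤ x ^ ε + n * (x ^ ε / ε) := by
        gcongr
        · exact Real.one_le_rpow hx hε.le
        · exact Real.log_le_rpow_div hx0.le hε
    _ = (1 + n / ε) * x ^ ε := by ring

theorem pow_add_sum_truncInv_le {d : ℕ} (hd : d ≠ 0) {θ : ℝ} {u : ℤ} {q : ℕ}
    (hθ : IsApproximant θ u q) (F : ℕ) {N : ℕ} (hN : 1 ≤ N) :
    N ^ d + ∑ j ∈ Icc 1 (F * N ^ d), truncInv N (j * θ : ℝ) ≤
      (7 + 6 * F) * (1 + Real.log q) * N ^ (d + 1) *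
        (1 / q + 1 / N + q / N ^ (d + 1)) := by
  set L := 1 + Real.log q
  have hL : 1 ≤ L := le_add_of_nonneg_right (Real.log_natCast_nonneg q)
  have hN1 : (1 : ℝ) ≤ N := mod_cast hN
  have hq0 : (0 : ℝ) < q := by exact_mod_cast hθ.1
  have hNd : (N : ℝ) ≤ N ^ d := le_self_pow₀ hN1 hd
  have hA : 0 ≤ (N : ℝ) ^ (d + 1) / q := by positivity
  calc N ^ d + ∑ j ∈ Icc 1 (F * N ^ d), truncInv N (j * θ : ℝ)
      ≤ N ^ d + (((F * N ^ d : ℕ) : ℝ) / q + 1) * (6 * N + 6 * q * L) := by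
        gcongr; exact sum_Icc_truncInv_mul_le N.cast_nonneg hθ _
    _ = 1 * N ^ d + 6 * F * 1 * (N ^ (d + 1) / q) + 6 * F * L * N ^ d + 6 * 1 * N + 6 * L * q := by
        push_cast; field_simp; ring
    _ ≤ L * N ^ d + 6 * F * L * (N ^ (d + 1) / q) + 6 * F * L * N ^ d + 6 * L * N ^ d +
          6 * L * q := by gcongr
    _ ≤ (7 + 6 * F) * L * (N ^ (d + 1) / q + N ^ d + q) := by
        have h1 : 0 ≤ L * (N ^ (d + 1) / q) := by positivity
        have h2 : 0 ≤ F * (L * q) := by positivity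
        nlinarith
    _ = (7 + 6 * F) * L * N ^ (d + 1) * (1 / q + 1 / N + q / N ^ (d + 1)) := by
        field_simp; ring

theorem exists_norm_sum_ee_eval_pow_le {d : ℕ} (hd : d ≠ 0) {ε : ℝ} (hε : 0 < ε) :
    ∃ C : ℝ, 0 ≤ C ∧ ∀ p : ℝ[X], p.natDegree ≤ d + 1 → ∀ (u : ℤ) (q : ℕ),
      IsApproximant (p.coeff (d + 1)) u q → ∀ N : ℕ, 1 ≤ N →
        ‖∑ k ∈ range N, ee (p.eval (k : ℝ))‖ ^ 2 ^ d ≤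
          C * N ^ 2 ^ d * (N : ℝ) ^ ε * (1 / q + 1 / N + q / N ^ (d + 1)) := by
  obtain ⟨C, hC, hweyl⟩ := exists_weylDifferencingBound d (half_pos hε)
  set c : ℝ := (7 + 6 * (d + 1)!) * (1 + (d + 1 : ℕ) / (ε / 2))
  have hc : 0 ≤ c := by positivity
  refine ⟨C * c + 1, by positivity, fun p hp u q hθ N hN => ?_⟩
  set S := ‖∑ k ∈ range N, ee (p.eval (k : ℝ))‖
  set V : ℝ := 1 / q + 1 / N + q / N ^ (d + 1)
  have hN1 : (1 : ℝ) ≤ N := mod_cast hN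
  have hN0 : (0 : ℝ) < N := one_pos.trans_le hN1
  have hq0 : (0 : ℝ) < q := by exact_mod_cast hθ.1
  have hE2 : (N : ℝ) ^ ε = N ^ (ε / 2) * N ^ (ε / 2) := by rw [← Real.rpow_add hN0, add_halves]
  have hE : 1 ≤ (N : ℝ) ^ ε := Real.one_le_rpow hN1 hε.le
  rcases le_or_gt (q : ℝ) (N ^ (d + 1)) with hqN | hqN
  · refine le_of_mul_le_mul_left ?_ (pow_pos hN0 (d + 1))
    calc N ^ (d + 1) * S ^ 2 ^ d
        ≤ C * N ^ 2 ^ d * N ^ (ε / 2) *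
            ((7 + 6 * (d + 1)!) * (1 + Real.log q) * N ^ (d + 1) * V) := by
          refine (hweyl p hp N N hN le_rfl).trans ?_
          gcongr
          exact pow_add_sum_truncInv_le hd hθ _ hN
      _ ≤ C * N ^ 2 ^ d * N ^ (ε / 2) * ((7 + 6 * (d + 1)!) *
            ((1 + (d + 1 : ℕ) / (ε / 2)) * N ^ (ε / 2)) * N ^ (d + 1) * V) := by
          gcongr
          exact one_add_log_le_mul_rpow (half_pos hε) hN1 hq0 hqN
      _ = N ^ (d + 1) * (C * c * N ^ 2 ^ d * N ^ ε * V) := by rw [hE2]; ring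
      _ ≤ N ^ (d + 1) * ((C * c + 1) * N ^ 2 ^ d * N ^ ε * V) := by gcongr; linarith
  · have hV : 1 ≤ V :=
      ((one_le_div (by positivity)).2 hqN.le).trans (le_add_of_nonneg_left (by positivity))
    calc S ^ 2 ^ d ≤ 1 * N ^ 2 ^ d * 1 * 1 := by
          rw [one_mul, mul_one, mul_one]; gcongr; exact norm_sum_ee_le _ le_rfl
      _ ≤ (C * c + 1) * N ^ 2 ^ d * N ^ ε * V := by gcongr; linarith [mul_nonneg hC hc]

theorem exists_norm_sum_ee_eval_le_rpow {d : ℕ} (hd : d ≠ 0) {Δ : ℝ} (hΔ : Δ ≤ 1) {A : ℝ}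
    (hA : 0 ≤ A) {ε : ℝ} (hε : 0 < ε) :
    ∃ B : ℝ, 0 ≤ B ∧ ∀ p : ℝ[X], p.natDegree ≤ d + 1 → ∀ (u : ℤ) (q : ℕ),
      IsApproximant (p.coeff (d + 1)) u q → ∀ N : ℕ, 1 ≤ N → (N : ℝ) ^ Δ ≤ q →
        q ≤ A * (N : ℝ) ^ (d + 1 - Δ) →
          ‖∑ k ∈ range N, ee (p.eval (k : ℝ))‖ ≤ B * (N : ℝ) ^ (1 - Δ / 2 ^ d + ε) := by
  obtain ⟨C, hC, hweyl⟩ := exists_norm_sum_ee_eval_pow_le hd (ε := ε * 2 ^ d) (by positivity)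
  refine ⟨C * (2 + A) + 1, by positivity, fun p hp u q hθ N hN hNq hqN => ?_⟩
  have hN1 : (1 : ℝ) ≤ N := mod_cast hN
  have hN0 : (0 : ℝ) < N := one_pos.trans_le hN1
  have hsmall : 1 / q + 1 / N + q / N ^ (d + 1) ≤ (2 + A) * (N : ℝ) ^ (-Δ) := by
    have hq : (1 : ℝ) / q ≤ N ^ (-Δ) := by
      rw [Real.rpow_neg hN0.le, ← one_div]; gcongr
    have hN' : (1 : ℝ) / N ≤ N ^ (-Δ) := by
      rw [one_div, ← Real.rpow_neg_one]; gcongr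
    have hqN' : (q : ℝ) / N ^ (d + 1) ≤ A * N ^ (-Δ) := by
      rw [div_le_iff₀ (by positivity), mul_assoc, ← Real.rpow_natCast, ← Real.rpow_add hN0]
      refine hqN.trans_eq ?_
      congr 2
      push_cast
      ring
    linarith
  have hrpow : (N : ℝ) ^ 2 ^ d * N ^ (ε * 2 ^ d) * N ^ (-Δ) =
      (N ^ (1 - Δ / 2 ^ d + ε)) ^ 2 ^ d := by
    rw [← Real.rpow_natCast (N : ℝ), ← Real.rpow_natCast (_ ^ _), ← Real.rpow_mul hN0.le,
      ← Real.rpow_add hN0, ← Real.rpow_add hN0]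
    congr 1
    push_cast
    field_simp
    ring
  have h2d : 2 ^ d ≠ 0 := by positivity
  refine le_of_pow_le_pow_left₀ h2d (by positivity) ?_
  calc ‖∑ k ∈ range N, ee (p.eval (k : ℝ))‖ ^ 2 ^ d
      ≤ C * N ^ 2 ^ d * N ^ (ε * 2 ^ d) * ((2 + A) * N ^ (-Δ)) := by
        refine (hweyl p hp u q hθ N hN).trans ?_; gcongr
    _ = C * (2 + A) * (N ^ (1 - Δ / 2 ^ d + ε)) ^ 2 ^ d := by rw [← hrpow]; ring
    _ ≤ (C * (2 + A) + 1) ^ 2 ^ d * (N ^ (1 - Δ / 2 ^ d + ε)) ^ 2 ^ d := by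
        gcongr
        exact (le_add_of_nonneg_right zero_le_one).trans
          (le_self_pow₀ (le_add_of_nonneg_left (by positivity)) h2d)
    _ = ((C * (2 + A) + 1) * N ^ (1 - Δ / 2 ^ d + ε)) ^ 2 ^ d := (mul_pow _ _ _).symm

theorem IsApproximant.neg {θ : ℝ} {u q : ℤ} (h : IsApproximant θ u q) :
    IsApproximant (-θ) (-u) q := by
  refine ⟨h.1, by rw [Int.neg_gcd, h.2.1], ?_⟩
  rw [Int.cast_neg, neg_div, sub_neg_eq_add, neg_add_eq_sub, abs_sub_comm]
  exact h.2.2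

theorem exists_norm_sum_ee_eval_le_of_mem_Bset {d : ℕ} (hd : d ≠ 0) {Δ : ℝ} (hΔ0 : 0 ≤ Δ)
    (hΔ1 : Δ ≤ 1) (m : ℤ) (α : ℝ) {ε : ℝ} (hε : 0 < ε) :
    ∃ B : ℝ, 0 ≤ B ∧ ∀ t ∈ Bset (d + 1) Δ m α, ∀ p : ℝ[X], p.natDegree ≤ d + 1 →
      |p.coeff (d + 1)| = t → ∀ N : ℕ, 1 ≤ N → 1 ≤ 2 * (N * t ^ α) →
        ‖∑ k ∈ range N, ee (p.eval (k : ℝ))‖ ≤ B * (N : ℝ) ^ (1 - Δ / 2 ^ d + ε) := by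
  set A : ℝ := max 1 (2 * m)
  obtain ⟨B, hB, hweyl⟩ := exists_norm_sum_ee_eval_le_rpow hd hΔ1
    (A := A ^ (d + 1 - Δ)) (by positivity) hε
  refine ⟨B, hB, fun t ht p hp hpt N hN hNt => ?_⟩
  obtain ⟨⟨ht0, -⟩, hdense⟩ := ht
  set M := max (N : ℝ) (m * t ^ (-α))
  have hMA : M ≤ A * N := by
    have hτ : 0 < t ^ α := Real.rpow_pos_of_pos ht0 α
    have hτinv : t ^ (-α) ≤ 2 * N := by
      rw [Real.rpow_neg ht0.le, inv_le_iff_one_le_mul₀ hτ]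
      linarith
    refine max_le (le_mul_of_one_le_left N.cast_nonneg (le_max_left _ _)) ?_
    calc m * t ^ (-α) ≤ A / 2 * (2 * N) := by
          gcongr; linarith [le_max_right 1 (2 * (m : ℝ))]
      _ = A * N := by ring
  obtain ⟨u, q, hθ, hMq, hqM⟩ := hdense M (le_max_right _ _)
  lift q to ℕ using zero_le_one.trans hθ.1
  have hexp : (0 : ℝ) ≤ d + 1 - Δ := by
    have : (0 : ℝ) ≤ d := d.cast_nonneg
    linarith
  have hNq : (N : ℝ) ^ Δ ≤ q := by
    refine (Real.rpow_le_rpow N.cast_nonneg (le_max_left _ _) hΔ0).trans (mod_cast hMq.le)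
  have hqN : (q : ℝ) ≤ A ^ (d + 1 - Δ) * (N : ℝ) ^ (d + 1 - Δ) := by
    rw [← Real.mul_rpow (by positivity) (by positivity)]
    refine le_trans (mod_cast hqM) (Real.rpow_le_rpow (by positivity) hMA hexp)
  rcases eq_or_eq_neg_of_abs_eq hpt with hp' | hp'
  · exact hweyl p hp u q (hp' ▸ hθ) N hN hNq hqN
  · exact hweyl p hp (-u) q (hp' ▸ hθ.neg) N hN hNq hqN

end WeylInequality

/-! ### Tails of cut-off series -/

section Tail

open scoped NNReal

/-- A cutoff at scale one: a `D`-Lipschitz function equal to `1` on `[-1/2, 1/2]` and to `0`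
outside `(-2, 2)`. This is all of `GoodPhi` that controls the tail of the series of `U(t,x)`. -/
structure IsLipschitzCutoff (D : ℝ≥0) (ψ : ℝ → ℝ) : Prop where
  lipschitzWith : LipschitzWith D ψ
  eq_one : ∀ x, |x| ≤ 1 / 2 → ψ x = 1
  eq_zero : ∀ x, 2 ≤ |x| → ψ x = 0

theorem GoodPhi.exists_isLipschitzCutoff {φ : ℝ → ℝ} (hφ : GoodPhi φ) :
    ∃ D, IsLipschitzCutoff D φ := by
  obtain ⟨hsmooth, hone, hzero, -⟩ := hφ
  have hsupp : HasCompactSupport φ := by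
    refine HasCompactSupport.intro (isCompact_Icc (a := -2) (b := 2)) fun x hx => hzero x ?_
    contrapose! hx
    exact abs_le.1 hx.le
  obtain ⟨D, hD⟩ := hsmooth.lipschitzWith_of_hasCompactSupport (𝕂 := ℝ) hsupp (by simp)
  exact ⟨D, hD, hone, hzero⟩

/-- The weight `(1 - ψ(kτ))/k` of the `k`-th term of a series from which the part cut off by `ψ`
at scale `1/τ` has been removed; it is `0` at `k = 0`. -/
noncomputable def tailWeight (ψ : ℝ → ℝ) (τ : ℝ) (k : ℕ) : ℝ :=
  (1 - ψ (k * τ)) / k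

namespace IsLipschitzCutoff

variable {D : ℝ≥0} {ψ : ℝ → ℝ}

theorem comp_neg (hψ : IsLipschitzCutoff D ψ) : IsLipschitzCutoff D fun x => ψ (-x) where
  lipschitzWith :=
    .of_dist_le_mul fun x y => by simpa using hψ.lipschitzWith.dist_le_mul (-x) (-y)
  eq_one x hx := hψ.eq_one _ ((abs_neg x).trans_le hx)
  eq_zero x hx := hψ.eq_zero _ (hx.trans_eq (abs_neg x).symm)

theorem map_zero (hψ : IsLipschitzCutoff D ψ) : ψ 0 = 1 := hψ.eq_one 0 (by simp)

theorem abs_sub_le (hψ : IsLipschitzCutoff D ψ) (x y : ℝ) : |ψ x - ψ y| ≤ D * |x - y| := by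
  simpa [Real.dist_eq] using hψ.lipschitzWith.dist_le_mul x y

theorem abs_one_sub_le (hψ : IsLipschitzCutoff D ψ) (x : ℝ) : |1 - ψ x| ≤ 1 + 2 * D := by
  rcases le_total 2 |x| with hx | hx
  · simp [hψ.eq_zero x hx]
  · calc |1 - ψ x| = |ψ x - ψ 0| := by rw [hψ.map_zero, abs_sub_comm]
      _ ≤ D * |x| := by simpa using hψ.abs_sub_le x 0
      _ ≤ 1 + 2 * D := by nlinarith [D.coe_nonneg]

theorem natCast_mul_tailWeight (hψ : IsLipschitzCutoff D ψ) (τ : ℝ) (k : ℕ) :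
    k * tailWeight ψ τ k = 1 - ψ (k * τ) := by
  rcases eq_or_ne k 0 with rfl | hk
  · simp [hψ.map_zero]
  · exact mul_div_cancel₀ _ (Nat.cast_ne_zero.2 hk)

theorem tailWeight_eq_zero (hψ : IsLipschitzCutoff D ψ) {τ : ℝ} (hτ : 0 ≤ τ) {k : ℕ}
    (hk : k * τ ≤ 1 / 2) : tailWeight ψ τ k = 0 := by
  rw [tailWeight, hψ.eq_one _ ((abs_of_nonneg (by positivity)).trans_le hk), sub_self, zero_div]

theorem abs_tailWeight_le (hψ : IsLipschitzCutoff D ψ) (τ : ℝ) (k : ℕ) :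
    |tailWeight ψ τ k| ≤ 2 * (1 + 2 * D) / (k + 1) := by
  rcases Nat.eq_zero_or_pos k with rfl | hk
  · rw [tailWeight, Nat.cast_zero, div_zero, abs_zero]; positivity
  · have hk1 : (1 : ℝ) ≤ k := mod_cast hk
    rw [le_div_iff₀ (by positivity)]
    calc |tailWeight ψ τ k| * (k + 1) ≤ |tailWeight ψ τ k| * (2 * k) := by gcongr; linarith
      _ = 2 * |1 - ψ (k * τ)| := by
          rw [← hψ.natCast_mul_tailWeight, abs_mul, Nat.abs_cast]; ring
      _ ≤ 2 * (1 + 2 * D) := by gcongr; exact hψ.abs_one_sub_le _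

theorem abs_sub_succ_le (hψ : IsLipschitzCutoff D ψ) {τ : ℝ} (hτ : 0 ≤ τ) (k : ℕ) :
    |ψ (k * τ) - ψ ((k + 1) * τ)| ≤ (1 + 4 * D) / (k + 1) := by
  have hk : (0 : ℝ) < k + 1 := by positivity
  have hD := D.coe_nonneg
  rw [le_div_iff₀ hk]
  rcases le_total ((k + 1) * τ) 4 with hle | hge
  · calc |ψ (k * τ) - ψ ((k + 1) * τ)| * (k + 1)
        ≤ D * |k * τ - (k + 1) * τ| * (k + 1) := by gcongr; exact hψ.abs_sub_le _ _
      _ = D * ((k + 1) * τ) := by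
          rw [← sub_mul, sub_add_cancel_left, neg_one_mul, abs_neg, abs_of_nonneg hτ]; ring
      _ ≤ 1 + 4 * D := by nlinarith
  · have hsucc : ψ ((k + 1) * τ) = 0 :=
      hψ.eq_zero _ (le_abs.2 (Or.inl (by linarith)))
    rcases Nat.eq_zero_or_pos k with rfl | hk
    · rw [hsucc, Nat.cast_zero, zero_mul, hψ.map_zero]
      norm_num
    · have hk1 : (1 : ℝ) ≤ k := mod_cast hk
      rw [hsucc, hψ.eq_zero _ (le_abs.2 (Or.inl (by nlinarith)))]
      simp only [sub_self, abs_zero, zero_mul]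
      positivity

theorem abs_tailWeight_succ_sub_le (hψ : IsLipschitzCutoff D ψ) {τ : ℝ} (hτ : 0 ≤ τ) (k : ℕ) :
    |tailWeight ψ τ (k + 1) - tailWeight ψ τ k| ≤ (3 + 8 * D) / (k + 1) ^ 2 := by
  have hk : (0 : ℝ) < k + 1 := by positivity
  have hsucc := hψ.natCast_mul_tailWeight τ (k + 1)
  have hcur := hψ.natCast_mul_tailWeight τ k
  push_cast at hsucc
  have hdiff : tailWeight ψ τ (k + 1) - tailWeight ψ τ k =
      (ψ (k * τ) - ψ ((k + 1) * τ) - tailWeight ψ τ k) / (k + 1) := by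
    rw [eq_div_iff hk.ne']
    linarith
  rw [hdiff, abs_div, abs_of_pos hk, sq, ← div_div]
  gcongr
  calc |ψ (k * τ) - ψ ((k + 1) * τ) - tailWeight ψ τ k|
      ≤ (1 + 4 * D) / (k + 1) + 2 * (1 + 2 * D) / (k + 1) :=
        (abs_sub _ _).trans (add_le_add (hψ.abs_sub_succ_le hτ k) (hψ.abs_tailWeight_le τ k))
    _ = (3 + 8 * D) / (k + 1) := by ring

end IsLipschitzCutoff

theorem tendsto_sum_mul_of_summable_sub_mul {w : ℕ → ℂ} {b : ℕ → ℂ}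
    (hw : Tendsto (fun K => w K * ∑ k ∈ range (K + 1), b k) atTop (nhds 0))
    (hs : Summable fun k => (w (k + 1) - w k) * ∑ i ∈ range (k + 1), b i) :
    Tendsto (fun K => ∑ k ∈ range K, w k * b k) atTop
      (nhds (-∑' k, (w (k + 1) - w k) * ∑ i ∈ range (k + 1), b i)) := by
  rw [← tendsto_add_atTop_iff_nat 1, ← zero_sub]
  refine (hw.sub hs.hasSum.tendsto_sum_nat).congr fun K => ?_
  simpa only [smul_eq_mul, add_tsub_cancel_right] using (sum_range_by_parts w b (K + 1)).symm

section AbelSummation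

variable {D : ℝ≥0} {ψ : ℝ → ℝ} {σ τ B : ℝ} {b : ℕ → ℂ}

theorem IsLipschitzCutoff.tendsto_tailWeight_mul_sum (hψ : IsLipschitzCutoff D ψ) (hσ : 0 < σ)
    (hτ : 0 < τ)
    (hb : ∀ N : ℕ, 1 ≤ N → 1 ≤ 2 * (N * τ) → ‖∑ k ∈ range N, b k‖ ≤ B * (N : ℝ) ^ (1 - σ)) :
    Tendsto (fun K => (tailWeight ψ τ K : ℂ) * ∑ k ∈ range (K + 1), b k) atTop (nhds 0) := by
  have hdecay : Tendsto (fun K : ℕ => 2 * (1 + 2 * D) * B * ((K + 1 : ℕ) : ℝ) ^ (-σ)) atTop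
      (nhds 0) := by
    have := (tendsto_rpow_neg_atTop hσ).comp
      (tendsto_natCast_atTop_atTop.comp (tendsto_add_atTop_nat 1))
    simpa using this.const_mul (2 * (1 + 2 * D) * B)
  refine squeeze_zero_norm' ?_ hdecay
  filter_upwards [eventually_ge_atTop ⌈1 / (2 * τ)⌉₊] with K hK
  have hK0 : (0 : ℝ) < (K + 1 : ℕ) := by positivity
  have hKτ : 1 ≤ 2 * (((K + 1 : ℕ) : ℝ) * τ) := by
    have := (Nat.le_ceil _).trans (Nat.cast_le.2 hK : _ ≤ (K : ℝ))
    rw [div_le_iff₀ (by positivity)] at this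
    push_cast
    linarith
  calc ‖(tailWeight ψ τ K : ℂ) * ∑ k ∈ range (K + 1), b k‖
      ≤ 2 * (1 + 2 * D) / (K + 1) * (B * ((K + 1 : ℕ) : ℝ) ^ (1 - σ)) := by
        rw [norm_mul, Complex.norm_real, Real.norm_eq_abs]
        gcongr
        · exact hψ.abs_tailWeight_le τ K
        · exact hb (K + 1) le_add_self hKτ
    _ = 2 * (1 + 2 * D) * B * ((K + 1 : ℕ) : ℝ) ^ (-σ) := by
        rw [sub_eq_add_neg, Real.rpow_add hK0, Real.rpow_one]
        push_cast
        field_simp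

theorem IsLipschitzCutoff.norm_tailWeight_sub_mul_sum_le (hψ : IsLipschitzCutoff D ψ) {η : ℝ}
    (hησ : η ≤ σ) (hτ : 0 < τ) (hB : 0 ≤ B)
    (hb : ∀ N : ℕ, 1 ≤ N → 1 ≤ 2 * (N * τ) → ‖∑ k ∈ range N, b k‖ ≤ B * (N : ℝ) ^ (1 - σ))
    (k : ℕ) :
    ‖((tailWeight ψ τ (k + 1) : ℂ) - tailWeight ψ τ k) * ∑ i ∈ range (k + 1), b i‖ ≤
      (3 + 8 * D) * B * (2 * τ) ^ (σ - η) * ((k + 1 : ℕ) : ℝ) ^ (-(1 + η)) := by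
  set j : ℝ := ((k + 1 : ℕ) : ℝ) with hj
  have hj0 : 0 < j := by positivity
  rw [norm_mul, ← Complex.ofReal_sub, Complex.norm_real, Real.norm_eq_abs]
  rcases le_or_gt (j * τ) (1 / 2) with hjτ | hjτ
  · have hk : k * τ ≤ 1 / 2 := by rw [hj] at hjτ; push_cast at hjτ; linarith
    rw [hψ.tailWeight_eq_zero hτ.le hjτ, hψ.tailWeight_eq_zero hτ.le hk, sub_self, abs_zero,
      zero_mul]
    positivity
  · have hscale : j ^ (-(σ - η)) ≤ (2 * τ) ^ (σ - η) := by
      rw [Real.rpow_neg hj0.le, ← Real.inv_rpow hj0.le]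
      refine Real.rpow_le_rpow (by positivity) ?_ (by linarith)
      rw [inv_le_iff_one_le_mul₀ hj0]
      linarith
    have hsplit : j ^ (1 - σ) / j ^ 2 = j ^ (-(σ - η)) * j ^ (-(1 + η)) := by
      rw [← Real.rpow_natCast, ← Real.rpow_sub hj0, ← Real.rpow_add hj0]
      congr 1
      push_cast
      ring
    calc |tailWeight ψ τ (k + 1) - tailWeight ψ τ k| * ‖∑ i ∈ range (k + 1), b i‖
        ≤ (3 + 8 * D) / j ^ 2 * (B * j ^ (1 - σ)) := by
          gcongr
          · simpa only [hj, Nat.cast_add_one] using hψ.abs_tailWeight_succ_sub_le hτ.le k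
          · exact hb (k + 1) le_add_self (by linarith)
      _ = (3 + 8 * D) * B * (j ^ (1 - σ) / j ^ 2) := by ring
      _ ≤ (3 + 8 * D) * B * ((2 * τ) ^ (σ - η) * j ^ (-(1 + η))) := by rw [hsplit]; gcongr
      _ = (3 + 8 * D) * B * (2 * τ) ^ (σ - η) * j ^ (-(1 + η)) := by ring

end AbelSummation

theorem IsLipschitzCutoff.exists_tendsto_sum_tailWeight_mul {D : ℝ≥0} {ψ : ℝ → ℝ}
    (hψ : IsLipschitzCutoff D ψ) {σ η : ℝ} (hη : 0 < η) (hησ : η ≤ σ) :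
    ∃ C : ℝ, 0 ≤ C ∧ ∀ τ B : ℝ, 0 < τ → 0 ≤ B → ∀ b : ℕ → ℂ,
      (∀ N : ℕ, 1 ≤ N → 1 ≤ 2 * (N * τ) → ‖∑ k ∈ range N, b k‖ ≤ B * (N : ℝ) ^ (1 - σ)) →
        ∃ l : ℂ, Tendsto (fun K => ∑ k ∈ range K, (tailWeight ψ τ k : ℂ) * b k) atTop (nhds l) ∧
          ‖l‖ ≤ C * B * τ ^ (σ - η) := by
  have hZ : Summable fun k : ℕ => ((k + 1 : ℕ) : ℝ) ^ (-(1 + η)) :=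
    (summable_nat_add_iff 1).2 (Real.summable_nat_rpow.2 (by linarith))
  set Z := ∑' k : ℕ, ((k + 1 : ℕ) : ℝ) ^ (-(1 + η))
  have hZ0 : 0 ≤ Z := tsum_nonneg fun k => by positivity
  refine ⟨(3 + 8 * D) * 2 ^ (σ - η) * Z, by positivity, fun τ B hτ hB b hb => ?_⟩
  have hbound := hψ.norm_tailWeight_sub_mul_sum_le hησ hτ hB hb
  have hmajor := hZ.mul_left ((3 + 8 * D) * B * (2 * τ) ^ (σ - η))
  refine ⟨_, tendsto_sum_mul_of_summable_sub_mul
    (hψ.tendsto_tailWeight_mul_sum (hη.trans_le hησ) hτ hb)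
    (Summable.of_norm_bounded hmajor hbound), ?_⟩
  calc ‖-∑' k, ((tailWeight ψ τ (k + 1) : ℂ) - tailWeight ψ τ k) * ∑ i ∈ range (k + 1), b i‖
      ≤ (3 + 8 * D) * B * (2 * τ) ^ (σ - η) * Z := by
        rw [norm_neg, ← tsum_mul_left]
        exact tsum_of_norm_bounded hmajor.hasSum hbound
    _ = (3 + 8 * D) * 2 ^ (σ - η) * Z * B * τ ^ (σ - η) := by
        rw [Real.mul_rpow zero_le_two hτ.le]; ring

end Tail

/-! ### The series of `U` and its cutoff -/

section USeries

open Polynomial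
open scoped NNReal

/-- The `k`-th term `(sin(2πγk)/(πk))·e(t·k^n + x·k)` of the series of `U(t,x)`; it is `0` at
`k = 0`. -/
noncomputable def uTerm (n : ℕ) (γ t x : ℝ) (k : ℤ) : ℂ :=
  Complex.ofReal (Real.sin (2 * Real.pi * γ * k) / (Real.pi * k)) * ee (t * (k : ℝ) ^ n + x * k)

theorem uTerm_zero (n : ℕ) (γ t x : ℝ) : uTerm n γ t x 0 = 0 := by
  simp [uTerm]

theorem uTerm_neg (n : ℕ) (γ t x : ℝ) (k : ℤ) :
    uTerm n γ t x (-k) = uTerm n γ ((-1) ^ n * t) (-x) k := by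
  have hphase : t * (-(k : ℝ)) ^ n + x * -k = (-1) ^ n * t * (k : ℝ) ^ n + -x * k := by
    rw [neg_pow]; ring
  rw [uTerm, uTerm, Int.cast_neg, hphase, mul_neg, mul_neg, Real.sin_neg, neg_div_neg_eq]

theorem Upartial_eq_add_sum_uTerm (n : ℕ) (γ t x : ℝ) (K : ℕ) :
    Upartial n γ t x K = Complex.ofReal (2 * γ) + ∑ k ∈ Icc (-(K : ℤ)) K, uTerm n γ t x k := by
  rw [Upartial]
  congr 1
  refine sum_filter_of_ne fun k _ hk => ?_
  rintro rfl
  exact hk (uTerm_zero n γ t x)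

theorem Ustar_eq_add_sum_mul_uTerm (n : ℕ) (γ : ℝ) {φ : ℝ → ℝ} (hφ : ∀ x, 2 ≤ |x| → φ x = 0)
    {α t : ℝ} (ht : 0 < t ^ α) (x : ℝ) {K : ℕ} (hK : 2 ≤ K * t ^ α) :
    Ustar n γ φ α t x = Complex.ofReal (2 * γ) +
      ∑ k ∈ Icc (-(K : ℤ)) K, (φ (k * t ^ α) : ℂ) * uTerm n γ t x k := by
  rw [Ustar, tsum_eq_sum (s := Icc (-(K : ℤ)) K), mul_sum]
  · congr 1
    refine sum_congr rfl fun k _ => ?_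
    rw [uTerm, ← mul_assoc, ← mul_assoc, ← Complex.ofReal_mul, ← Complex.ofReal_mul]
    congr 2
    rw [← div_div, div_right_comm]
    ring
  · intro k hk
    have hKk : (K : ℝ) ≤ |(k : ℝ)| := by
      rw [mem_Icc, ← abs_le, not_le] at hk
      exact_mod_cast hk.le
    rw [hφ (k * t ^ α), zero_mul, Complex.ofReal_zero, zero_mul]
    rw [abs_mul, abs_of_pos ht]
    exact hK.trans (by gcongr)

theorem sum_Icc_neg_eq_sum_range {f : ℤ → ℂ} (hf : f 0 = 0) (K : ℕ) :
    ∑ k ∈ Icc (-(K : ℤ)) K, f k = ∑ k ∈ range (K + 1), (f k + f (-k)) := by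
  induction K with
  | zero => simp [hf]
  | succ K ih =>
    push_cast
    rw [sum_range_succ, ← ih, sum_Icc_succ_eq_add_endpoints, add_comm]
    push_cast
    rfl

theorem Upartial_sub_Ustar (n : ℕ) (γ : ℝ) {φ : ℝ → ℝ} (hφ : ∀ x, 2 ≤ |x| → φ x = 0)
    {α t : ℝ} (ht : 0 < t ^ α) (x : ℝ) {K : ℕ} (hK : 2 ≤ K * t ^ α) :
    Upartial n γ t x K - Ustar n γ φ α t x =
      ∑ k ∈ range (K + 1), ((1 - φ (k * t ^ α) : ℝ) : ℂ) * uTerm n γ t x k +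
        ∑ k ∈ range (K + 1),
          ((1 - φ (-(k * t ^ α)) : ℝ) : ℂ) * uTerm n γ ((-1) ^ n * t) (-x) k := by
  set f : ℤ → ℂ := fun k => ((1 - φ (k * t ^ α) : ℝ) : ℂ) * uTerm n γ t x k
  calc Upartial n γ t x K - Ustar n γ φ α t x = ∑ k ∈ Icc (-(K : ℤ)) K, f k := by
        rw [Upartial_eq_add_sum_uTerm, Ustar_eq_add_sum_mul_uTerm n γ hφ ht x hK,
          add_sub_add_left_eq_sub, ← sum_sub_distrib]
        refine sum_congr rfl fun k _ => ?_
        simp only [f]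
        push_cast
        ring
    _ = ∑ k ∈ range (K + 1), (f k + f (-k)) :=
        sum_Icc_neg_eq_sum_range (by simp only [f, uTerm_zero, mul_zero]) K
    _ = _ := by
        rw [← sum_add_distrib]
        refine sum_congr rfl fun k _ => ?_
        simp only [f, uTerm_neg, Int.cast_neg, Int.cast_natCast, neg_mul]

theorem ofReal_sin_two_pi_mul (y : ℝ) :
    ((Real.sin (2 * Real.pi * y) : ℝ) : ℂ) = (ee y - ee (-y)) / (2 * Complex.I) := by
  rw [ee_eq_exp_mul_I, ee_eq_exp_mul_I, mul_neg, Complex.ofReal_neg, mul_comm Complex.I,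
    mul_comm Complex.I, Complex.ofReal_sin, Complex.sin, div_eq_div_iff two_ne_zero (by simp)]
  linear_combination (2 * (Complex.exp (-((2 * Real.pi * y : ℝ) : ℂ) * Complex.I) -
    Complex.exp (((2 * Real.pi * y : ℝ) : ℂ) * Complex.I))) * Complex.I_sq

theorem norm_sum_sin_mul_ee_le {f : ℕ → ℝ} {N : ℕ} {R : ℝ}
    (h : ∀ y : ℝ, ‖∑ k ∈ range N, ee (f k + y * k)‖ ≤ R) (γ x : ℝ) :
    ‖∑ k ∈ range N, ((Real.sin (2 * Real.pi * γ * k) : ℝ) : ℂ) * ee (f k + x * k)‖ ≤ R := by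
  have hsum : ∑ k ∈ range N, ((Real.sin (2 * Real.pi * γ * k) : ℝ) : ℂ) * ee (f k + x * k) =
      (∑ k ∈ range N, ee (f k + (x + γ) * k) - ∑ k ∈ range N, ee (f k + (x - γ) * k)) /
        (2 * Complex.I) := by
    rw [← sum_sub_distrib, sum_div]
    refine sum_congr rfl fun k _ => ?_
    rw [mul_assoc, ofReal_sin_two_pi_mul, div_mul_eq_mul_div, sub_mul, ← ee_add, ← ee_add]
    ring_nf
  calc _ = ‖∑ k ∈ range N, ee (f k + (x + γ) * k) - ∑ k ∈ range N, ee (f k + (x - γ) * k)‖ / 2 := by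
        rw [hsum, norm_div, norm_mul, Complex.norm_I, Complex.norm_ofNat, mul_one]
    _ ≤ (R + R) / 2 := by
        gcongr; exact (norm_sub_le _ _).trans (add_le_add (h _) (h _))
    _ = R := add_self_div_two R

theorem one_sub_mul_uTerm (n : ℕ) (γ t x : ℝ) (ψ : ℝ → ℝ) (τ : ℝ) (k : ℕ) :
    ((1 - ψ (k * τ) : ℝ) : ℂ) * uTerm n γ t x k = ((1 / Real.pi : ℝ) : ℂ) *
      ((tailWeight ψ τ k : ℂ) *
        (((Real.sin (2 * Real.pi * γ * k) : ℝ) : ℂ) * ee (t * (k : ℝ) ^ n + x * k))) := by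
  rw [uTerm, tailWeight]
  push_cast
  ring

theorem exists_norm_sum_sin_mul_ee_le_of_mem_Bset {d : ℕ} (hd : d ≠ 0) {Δ : ℝ} (hΔ0 : 0 ≤ Δ)
    (hΔ1 : Δ ≤ 1) (m : ℤ) (α : ℝ) {ε : ℝ} (hε : 0 < ε) :
    ∃ B : ℝ, 0 ≤ B ∧ ∀ t ∈ Bset (d + 1) Δ m α, ∀ θ : ℝ, |θ| = t → ∀ γ x : ℝ, ∀ N : ℕ, 1 ≤ N →
      1 ≤ 2 * (N * t ^ α) →
        ‖∑ k ∈ range N, ((Real.sin (2 * Real.pi * γ * k) : ℝ) : ℂ) *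
          ee (θ * (k : ℝ) ^ (d + 1) + x * k)‖ ≤ B * (N : ℝ) ^ (1 - (Δ / 2 ^ d - ε)) := by
  obtain ⟨B, hB, hweyl⟩ := exists_norm_sum_ee_eval_le_of_mem_Bset hd hΔ0 hΔ1 m α hε
  refine ⟨B, hB, fun t ht θ hθ γ x N hN hNt =>
    norm_sum_sin_mul_ee_le (f := fun k => θ * (k : ℝ) ^ (d + 1)) (fun y => ?_) γ x⟩
  have hdeg : (C θ * X ^ (d + 1) + C y * X).natDegree ≤ d + 1 := by compute_degree!
  have hcoeff : (C θ * X ^ (d + 1) + C y * X).coeff (d + 1) = θ := by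
    simp [coeff_C_of_ne_zero hd]
  simpa [← sub_add] using hweyl t ht _ hdeg (hcoeff.symm ▸ hθ) N hN hNt

theorem exists_pos_le_sub_self_and_mul_le {δ ε : ℝ} (hδ : 0 < δ) (α : ℝ) (hε : 0 < ε) :
    ∃ η : ℝ, 0 < η ∧ η ≤ δ - η ∧ 2 * η * α ≤ ε := by
  set η := min (δ / 2) (ε / (2 * (|α| + 1)))
  have hη0 : 0 < η := lt_min (half_pos hδ) (by positivity)
  refine ⟨η, hη0, by linarith [min_le_left (δ / 2) (ε / (2 * (|α| + 1)))], ?_⟩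
  have hηε : η * (2 * (|α| + 1)) ≤ ε := (le_div_iff₀ (by positivity)).1 (min_le_right _ _)
  nlinarith [le_abs_self α]

theorem IsLipschitzCutoff.exists_tendsto_sum_one_sub_mul_uTerm {D : ℝ≥0} {ψ : ℝ → ℝ}
    (hψ : IsLipschitzCutoff D ψ) {d : ℕ} (hd : d ≠ 0) {Δ : ℝ} (hΔ0 : 0 < Δ) (hΔ1 : Δ ≤ 1)
    (m : ℤ) (α : ℝ) {ε : ℝ} (hε : 0 < ε) :
    ∃ C : ℝ, 0 ≤ C ∧ ∀ t ∈ Bset (d + 1) Δ m α, ∀ θ : ℝ, |θ| = t → ∀ γ x : ℝ, ∃ l : ℂ,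
      Tendsto (fun K : ℕ => ∑ k ∈ range K,
        ((1 - ψ (k * t ^ α) : ℝ) : ℂ) * uTerm (d + 1) γ θ x k) atTop (nhds l) ∧
      ‖l‖ ≤ C * t ^ (α * Δ / 2 ^ d - ε) := by
  set δ := Δ / 2 ^ d
  have hδ : 0 < δ := by positivity
  obtain ⟨η, hη, hηδ, hηε⟩ := exists_pos_le_sub_self_and_mul_le hδ α hε
  obtain ⟨B, hB, hweyl⟩ := exists_norm_sum_sin_mul_ee_le_of_mem_Bset hd hΔ0.le hΔ1 m α hη
  obtain ⟨C, hC, htail⟩ := hψ.exists_tendsto_sum_tailWeight_mul hη hηδ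
  refine ⟨1 / Real.pi * (C * B), by positivity, fun t ht θ hθ γ x => ?_⟩
  have ht0 : 0 < t := ht.1.1
  obtain ⟨l, hl, hlB⟩ := htail (t ^ α) B (Real.rpow_pos_of_pos ht0 α) hB _
    fun N hN hNt => hweyl t ht θ hθ γ x N hN hNt
  refine ⟨_, (hl.const_mul ((1 / Real.pi : ℝ) : ℂ)).congr fun K => ?_, ?_⟩
  · rw [mul_sum]
    exact sum_congr rfl fun k _ => (one_sub_mul_uTerm _ _ _ _ _ _ _).symm
  · calc ‖((1 / Real.pi : ℝ) : ℂ) * l‖ ≤ 1 / Real.pi * (C * B * (t ^ α) ^ (δ - η - η)) := by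
          rw [norm_mul, Complex.norm_real, Real.norm_of_nonneg (by positivity)]
          gcongr
      _ ≤ 1 / Real.pi * (C * B * t ^ (α * Δ / 2 ^ d - ε)) := by
          rw [← Real.rpow_mul ht0.le]
          gcongr 1 / Real.pi * (C * B * ?_)
          refine Real.rpow_le_rpow_of_exponent_ge ht0 ht.1.2 ?_
          rw [mul_div_assoc]
          linarith
      _ = 1 / Real.pi * (C * B) * t ^ (α * Δ / 2 ^ d - ε) := by ring

end USeries

open scoped NNReal in
theorem stmt15_general {n : ℕ} (hn : 2 ≤ n) {Δ : ℝ} (hΔ0 : 0 < Δ) (hΔ1 : Δ ≤ 1) (m : ℤ) (α : ℝ)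
    {ε : ℝ} (hε : 0 < ε) {D : ℝ≥0} {φ : ℝ → ℝ} (hφ : IsLipschitzCutoff D φ) :
    ∃ C > (0 : ℝ), ∀ t ∈ Bset n Δ m α, ∀ γ x : ℝ,
      ∃ L : ℂ, Tendsto (fun K : ℕ => Upartial n γ t x K) atTop (nhds L) ∧
        ‖L - Ustar n γ φ α t x‖ ≤ C * t ^ (α * Δ / 2 ^ (n - 1) - ε) := by
  obtain ⟨d, rfl⟩ : ∃ d, n = d + 1 := ⟨n - 1, by lia⟩
  have hd : d ≠ 0 := by lia
  obtain ⟨C₁, hC₁, hpos⟩ := hφ.exists_tendsto_sum_one_sub_mul_uTerm hd hΔ0 hΔ1 m α hε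
  obtain ⟨C₂, hC₂, hneg⟩ := hφ.comp_neg.exists_tendsto_sum_one_sub_mul_uTerm hd hΔ0 hΔ1 m α hε
  refine ⟨C₁ + C₂ + 1, by positivity, fun t ht γ x => ?_⟩
  have ht0 : 0 < t := ht.1.1
  have hτ : 0 < t ^ α := Real.rpow_pos_of_pos ht0 α
  obtain ⟨l₁, hl₁, hl₁C⟩ := hpos t ht t (abs_of_pos ht0) γ x
  obtain ⟨l₂, hl₂, hl₂C⟩ := hneg t ht ((-1) ^ (d + 1) * t) (by simp [abs_of_pos ht0]) γ (-x)
  refine ⟨Ustar (d + 1) γ φ α t x + (l₁ + l₂), ?_, ?_⟩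
  · refine Tendsto.congr' ?_ ((hl₁.add hl₂).comp (tendsto_add_atTop_nat 1) |>.const_add _)
    filter_upwards [eventually_ge_atTop ⌈2 / t ^ α⌉₊] with K hK
    have hKτ : 2 ≤ K * t ^ α := (div_le_iff₀ hτ).1 ((Nat.le_ceil _).trans (mod_cast hK))
    exact (sub_eq_iff_eq_add'.1 (Upartial_sub_Ustar _ γ hφ.eq_zero hτ x hKτ)).symm
  · rw [add_sub_cancel_left, add_tsub_cancel_right]
    calc ‖l₁ + l₂‖ ≤ (C₁ + C₂) * t ^ (α * Δ / 2 ^ d - ε) :=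
          (norm_add_le_of_le hl₁C hl₂C).trans_eq (add_mul _ _ _).symm
      _ ≤ (C₁ + C₂ + 1) * t ^ (α * Δ / 2 ^ d - ε) := by gcongr ?_ * _; linarith

/-- for irrational `t ∈ ℬ_{m,α}` the limit defining `U(t,x)` exists and
`U(t,x) = U*(t,x) + O(t^{αΔ/2^{n−1}−ε})`, uniformly in `x`. -/
theorem stmt15 (n : ℕ) (hn : 2 ≤ n) (Δ : ℝ) (hΔ0 : 0 < Δ) (hΔ1 : Δ < 1)
    (hΔ2 : n = 2 → Δ < 1 / 2) (γ : ℝ) (hγ : γ ∈ Set.Ioo (0 : ℝ) (1 / 2))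
    (m : ℤ) (hm : 2 ≤ m) (α : ℝ) (hα1 : ((n : ℝ) - Δ)⁻¹ < α) (hα2 : α < ((n : ℝ) - 1)⁻¹)
    (ε : ℝ) (hε : 0 < ε) (φ : ℝ → ℝ) (hφ : GoodPhi φ) :
    ∃ C > (0 : ℝ), ∀ t : ℝ, Irrational t → t ∈ Bset n Δ m α → ∀ x : ℝ,
      ∃ L : ℂ, Tendsto (fun K : ℕ => Upartial n γ t x K) atTop (nhds L) ∧
        ‖L - Ustar n γ φ α t x‖ ≤ C * t ^ (α * Δ / 2 ^ (n - 1) - ε) := by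
  obtain ⟨D, hD⟩ := hφ.exists_isLipschitzCutoff
  obtain ⟨C, hC, hbound⟩ := stmt15_general hn hΔ0 hΔ1.le m α hε hD
  exact ⟨C, hC, fun t _ ht x => hbound t ht γ x⟩
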